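/- Let k be a field, m, p ≥ 1 and n = m + p. Let A : Matrix (Fin m) (Fin n) k have rank m, let B : Matrix (Fin p) (Fin n) k have rank p, and suppose A * Bᵀ = 0. Then there exists a nonzero c ∈ k such that for every strictly monotone α : Fin m → Fin n, letting α^c : Fin p → Fin n denote the strictly monotone map whose range is the complement of the range of α, one has det (A.submatrix id α) = c * (−1)^(∑_i (α i : ℕ)) * det (B.submatrix id α^c). That is, the Plücker coordinates of a full-rank matrix and of a full-rank matrix spanning the orthogonal complement of its row space are proportional via complementary minors with sign (−1)^(∑ α i). -/

import Mathlib

lemma aux_right_inv {k : Type*} [Field k] {m n : ℕ} (A : Matrix (Fin m) (Fin n) k)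
    (hA : A.rank = m) : ∃ X : Matrix (Fin n) (Fin m) k, A * X = 1 := by
  rw [← Matrix.mulVec_surjective_iff_exists_right_inverse]
  have h : LinearMap.range A.mulVecLin = ⊤ := by
    apply Submodule.eq_top_of_finrank_eq
    rw [← Matrix.rank, hA]; simp
  exact LinearMap.range_eq_top.mp h

lemma aux_pow (N : ℕ) (x : Fin N) :
    (∏ y : Fin N, if y < x then (-1 : ℤˣ) else 1) = (-1) ^ (x : ℕ) := by
  have h : (Finset.univ.filter fun y : Fin N => y < x) = Finset.Iio x := by
    ext y; simp
  rw [← Finset.prod_filter, h, Finset.prod_const, Fin.card_Iio]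

lemma aux_sign (m p : ℕ) (α : Fin m → Fin (m + p)) (αc : Fin p → Fin (m + p))
    (hα : StrictMono α) (hαc : StrictMono αc) (e : Fin m ⊕ Fin p ≃ Fin (m + p))
    (he1 : ∀ i, e (Sum.inl i) = α i) (he2 : ∀ i, e (Sum.inr i) = αc i) :
    Equiv.Perm.sign (finSumFinEquiv.symm.trans e) =
      (-1) ^ (∑ i : Fin m, (i : ℕ)) * (-1) ^ (∑ i, (α i : ℕ)) := by
  have hne : ∀ a b, α a ≠ αc b := by
    intro a b h
    rw [← he1, ← he2] at h
    exact absurd (e.injective h) (by simp)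
  have h1 : Equiv.Perm.sign (finSumFinEquiv.symm.trans e) =
      ∏ b : Fin p, ∏ a : Fin m, if αc b < α a then (-1 : ℤˣ) else 1 := by
    rw [Equiv.Perm.sign_eq_prod_prod_Iio]
    have : ∀ j : Fin (m + p), ∀ f : Fin (m + p) → ℤˣ,
        ∏ i ∈ Finset.Iio j, f i = ∏ i, if i < j then f i else 1 := by
      intro j f
      rw [← Finset.prod_filter]
      congr 1
      ext y; simp
    simp only [this]
    rw [Fin.prod_univ_add]
    simp only [Fin.prod_univ_add, Equiv.trans_apply, finSumFinEquiv_symm_apply_castAdd,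
      finSumFinEquiv_symm_apply_natAdd, he1, he2, hα.lt_iff_lt, hαc.lt_iff_lt]
    have hlt : ∀ (a : Fin m) (b : Fin p), Fin.castAdd p a < Fin.natAdd m b := by
      intro a b; simp [Fin.lt_def]; omega
    have hnlt : ∀ (a : Fin m) (b : Fin p), ¬ Fin.natAdd m b < Fin.castAdd p a := by
      intro a b; exact (hlt a b).le.not_gt
    have hc : ∀ (a b : Fin m), Fin.castAdd p a < Fin.castAdd p b ↔ a < b := by
      intro a b; simp only [Fin.lt_def, Fin.val_castAdd, Fin.val_natAdd]
    have hd : ∀ (a b : Fin p), Fin.natAdd m a < Fin.natAdd m b ↔ a < b := by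
      intro a b; simp only [Fin.lt_def, Fin.val_castAdd, Fin.val_natAdd]; omega
    have hz : ∀ (P : Prop) [Decidable P], (if P then (if P then (1 : ℤˣ) else -1) else 1) = 1 := by
      intro P _; split_ifs <;> rfl
    simp only [hlt, hnlt, hc, hd, hz, if_true, if_false, Finset.prod_const_one, mul_one, one_mul]
    refine Finset.prod_congr rfl fun b _ => Finset.prod_congr rfl fun a _ => ?_
    rcases lt_or_gt_of_ne (hne a b) with h | h
    · simp [h, h.le.not_gt]
    · simp [h, h.le.not_gt]
  have h2 : ∀ a : Fin m, (-1 : ℤˣ) ^ (α a : ℕ) =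
      (-1) ^ (a : ℕ) * ∏ b : Fin p, if αc b < α a then (-1 : ℤˣ) else 1 := by
    intro a
    rw [← aux_pow, ← aux_pow, ← e.prod_comp, Fintype.prod_sum_type]
    simp only [he1, he2, hα.lt_iff_lt]
  rw [h1, Finset.prod_comm, ← Finset.prod_pow_eq_pow_sum, ← Finset.prod_pow_eq_pow_sum,
    ← Finset.prod_mul_distrib]
  refine Finset.prod_congr rfl fun a _ => ?_
  rw [h2, ← mul_assoc, ← mul_pow]; simp

theorem plucker_duality {k : Type*} [Field k] (m p n : ℕ)
    (hm : 1 ≤ m) (hp : 1 ≤ p) (hn : n = m + p)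
    (A : Matrix (Fin m) (Fin n) k) (B : Matrix (Fin p) (Fin n) k)
    (hA : A.rank = m) (hB : B.rank = p) (hAB : A * B.transpose = 0) :
    ∃ c : k, c ≠ 0 ∧
      ∀ (α : Fin m → Fin n) (αc : Fin p → Fin n),
        StrictMono α → StrictMono αc → Set.range αc = (Set.range α)ᶜ →
          (A.submatrix id α).det =
            c * (-1) ^ (∑ i, (α i : ℕ)) * (B.submatrix id αc).det := by
  subst hn
  obtain ⟨X, hX⟩ := aux_right_inv A hA
  obtain ⟨C, hC⟩ := aux_right_inv B hB
  have hC' : C.transpose * B.transpose = 1 := by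
    rw [← Matrix.transpose_mul, hC, Matrix.transpose_one]
  let M := Matrix.fromRows A C.transpose
  have hM : M * Matrix.fromCols X B.transpose =
      Matrix.fromBlocks 1 0 (C.transpose * X) 1 := by
    simp only [M]
    rw [Matrix.fromRows_mul_fromCols, hX, hC', hAB]
  let M0 := M.submatrix finSumFinEquiv.symm id
  have hM0 : M0.det ≠ 0 := by
    intro h0
    have h := congrArg Matrix.det (congrArg
      (fun Q => Q.submatrix finSumFinEquiv.symm finSumFinEquiv.symm) hM)
    simp only [Matrix.det_submatrix_equiv_self, Matrix.det_fromBlocks_zero₁₂,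
      Matrix.det_one, mul_one] at h
    rw [← Matrix.det_submatrix_equiv_self finSumFinEquiv.symm,
      Matrix.submatrix_mul _ _ _ id _ Function.bijective_id, Matrix.det_mul] at h
    change M0.det * _ = 1 at h
    rw [h0, zero_mul] at h
    exact zero_ne_one h
  refine ⟨(-1) ^ (∑ i : Fin m, (i : ℕ)) * M0.det,
    mul_ne_zero (pow_ne_zero _ (by simp)) hM0, ?_⟩
  intro α αc hα hαc hr
  have hbij : Function.Bijective (Sum.elim α αc) := by
    constructor
    · refine hα.injective.sumElim hαc.injective ?_
      intro a b h
      have : αc b ∈ (Set.range α)ᶜ := hr ▸ Set.mem_range_self b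
      exact this ⟨a, h⟩
    · rw [← Set.range_eq_univ, Set.Sum.elim_range, hr, Set.union_compl_self]
  let e := Equiv.ofBijective _ hbij
  have hs := aux_sign m p α αc hα hαc e (fun _ => rfl) (fun _ => rfl)
  have hdet : (M.submatrix id e).det =
      (-1) ^ (∑ i : Fin m, (i : ℕ)) * (-1) ^ (∑ i, (α i : ℕ)) * M0.det := by
    have h := Matrix.det_permute' (finSumFinEquiv.symm.trans e) M0
    rw [hs] at h
    rw [← Matrix.det_submatrix_equiv_self finSumFinEquiv.symm]
    refine Eq.trans ?_ (h.trans ?_)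
    · rfl
    · push_cast; rfl
  have hsplit : ∀ (r : ℕ) (D : Matrix (Fin r) (Fin (m + p)) k),
      D.submatrix id α * (B.submatrix id α).transpose
        + D.submatrix id αc * (B.submatrix id αc).transpose = D * B.transpose := by
    intro r D
    ext i j
    simp only [Matrix.add_apply, Matrix.mul_apply]
    rw [← e.sum_comp, Fintype.sum_sum_type]
    rfl
  have hblock : M.submatrix id e = Matrix.fromBlocks (A.submatrix id α) (A.submatrix id αc)
      (C.transpose.submatrix id α) (C.transpose.submatrix id αc) := by
    ext (i | i) (j | j) <;> rfl
  have hprod : M.submatrix id e * Matrix.fromBlocks 1 (B.submatrix id α).transpose 0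
      (B.submatrix id αc).transpose =
      Matrix.fromBlocks (A.submatrix id α) 0 (C.transpose.submatrix id α) 1 := by
    rw [hblock, Matrix.fromBlocks_multiply, hsplit, hsplit, hAB, hC']
    simp
  have h := congrArg Matrix.det hprod
  rw [Matrix.det_mul, hdet, Matrix.det_fromBlocks_zero₂₁, Matrix.det_fromBlocks_zero₁₂,
    Matrix.det_one, Matrix.det_one, Matrix.det_transpose, one_mul, mul_one] at h
  rw [← h]; ring
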